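/- arXiv:2103.03152 — 7 statements merged into one kernel-verified Lean document; each statement's English description precedes it below -/
import Mathlib

section
/- Let A be a commutative ring and let X, Y be additive subgroups of A such that xy = 0 for all x ∈ X and y ∈ Y. Then for every n ≥ 0, every k with 0 ≤ k ≤ n, all derivations D_1, …, D_k of A, all elements x_1, …, x_{n+1} ∈ X, and every y ∈ Y, one has x_1 ⋯ x_{n+1} · D_1(D_2(⋯ D_k(y) ⋯)) = 0. -/
/-!
Let `I` be the ideal generated by `X`, so that `I` annihilates `y`. If `I ^ (m + 1)` annihilates
`z` and `D` is a derivation, then `I ^ (m + 2)` annihilates `D z`: for `a ∈ I` and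
`b ∈ I ^ (m + 1)`, differentiating `b * z = 0` gives `a * b * D z = -(a * D b) * z`, and
`a * D b ∈ I ^ (m + 1)` because a derivation lowers the `I`-adic order by at most one. Hence
`I ^ (k + 1)` annihilates `D₁(⋯D_k(y)⋯)`.
-/

/-- Iterated application of a list of derivations: `applyChain [D₁, …, D_k] y = D₁(D₂(⋯D_k(y)⋯))`. -/
def applyChain {A : Type*} [CommRing A] : List (Derivation ℤ A A) → A → A
  | [], y => y
  | D :: l, y => D (applyChain l y)

section Derivation

variable {R A M : Type*} [CommSemiring R] [CommSemiring A] [Algebra R A]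
  [AddCommMonoid M] [Module A M] [Module R M]

theorem derivation_mem_pow_smul_top (D : Derivation R A M) (I : Ideal A) (m : ℕ) {w : A}
    (hw : w ∈ I ^ (m + 1)) : D w ∈ I ^ m • (⊤ : Submodule A M) := by
  induction m generalizing w with
  | zero => simp
  | succ m ih =>
    rw [pow_succ'] at hw
    induction hw using Submodule.mul_induction_on' with
    | mem_mul_mem a ha b hb =>
      rw [D.leibniz]
      refine add_mem ?_ (Submodule.smul_mem_smul hb Submodule.mem_top)
      rw [pow_succ', mul_smul]
      exact Submodule.smul_mem_smul ha (ih hb)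
    | add u _ v _ hu hv =>
      rw [map_add]
      exact add_mem hu hv

theorem smul_eq_zero_of_mem_smul_top {J : Ideal A} {z : A} (hz : J ≤ (A ∙ z).annihilator) {v : M}
    (hv : v ∈ J • (⊤ : Submodule A M)) : z • v = 0 := by
  induction hv using Submodule.smul_induction_on' with
  | smul r hr u _ =>
    have hrz : r * z = 0 := (Submodule.mem_annihilator_span_singleton z r).mp (hz hr)
    rw [smul_smul, mul_comm, hrz, zero_smul]
  | add u _ v _ hu hv => rw [smul_add, hu, hv, add_zero]

theorem pow_le_annihilator_span_derivation (D : Derivation R A M) {I : Ideal A} {m : ℕ} {z : A}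
    (hz : I ^ (m + 1) ≤ (A ∙ z).annihilator) : I ^ (m + 2) ≤ (A ∙ D z).annihilator := by
  rw [pow_succ', Ideal.mul_le]
  intro a ha b hb
  rw [Submodule.mem_annihilator_span_singleton]
  have hbz : b * z = 0 := (Submodule.mem_annihilator_span_singleton z b).mp (hz hb)
  have haDb : a • D b ∈ I ^ (m + 1) • (⊤ : Submodule A M) := by
    rw [pow_succ', mul_smul]
    exact Submodule.smul_mem_smul ha (derivation_mem_pow_smul_top D I m hb)
  calc (a * b) • D z
      = (a * b) • D z + z • a • D b := by rw [smul_eq_zero_of_mem_smul_top hz haDb, add_zero]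
    _ = a • D (b * z) := by rw [D.leibniz, smul_add, mul_smul, smul_comm z a]
    _ = 0 := by rw [hbz, map_zero, smul_zero]

end Derivation

theorem pow_le_annihilator_span_applyChain {A : Type*} [CommRing A] {I : Ideal A} {y : A}
    (hy : I ≤ (A ∙ y).annihilator) (l : List (Derivation ℤ A A)) :
    I ^ (l.length + 1) ≤ (A ∙ applyChain l y).annihilator := by
  induction l with
  | nil => simpa only [List.length_nil, zero_add, pow_one, applyChain] using hy
  | cons D l ih => exact pow_le_annihilator_span_derivation D ih

/-- Let `X`, `Y` be additive subgroups of a commutative ring `A` with `xy = 0` for all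
`x ∈ X`, `y ∈ Y`.  Then for all `n`, all `k ≤ n`, all derivations `D₁, …, D_k` of `A`,
all `x₁, …, x_{n+1} ∈ X` and all `y ∈ Y`, we have
`x₁ ⋯ x_{n+1} · D₁(D₂(⋯D_k(y)⋯)) = 0`. -/
theorem prod_mul_applyChain_eq_zero {A : Type*} [CommRing A] (X Y : AddSubgroup A)
    (h : ∀ x ∈ X, ∀ y ∈ Y, x * y = 0) (n k : ℕ) (hk : k ≤ n)
    (D : Fin k → Derivation ℤ A A) (x : Fin (n + 1) → A) (hx : ∀ i, x i ∈ X)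
    (y : A) (hy : y ∈ Y) :
    (∏ i, x i) * applyChain (List.ofFn D) y = 0 := by
  set I := Ideal.span (X : Set A)
  have hI : I ≤ (A ∙ y).annihilator := Ideal.span_le.mpr fun u hu =>
    (Submodule.mem_annihilator_span_singleton y u).mpr (h u hu y hy)
  have hprod : ∏ i, x i ∈ I ^ (n + 1) := by
    simpa only [Finset.prod_const, Finset.card_univ, Fintype.card_fin] using
      Ideal.prod_mem_prod (s := Finset.univ) (I := fun _ => I)
        fun i _ => Ideal.subset_span (hx i)
  have hchain : I ^ (k + 1) ≤ (A ∙ applyChain (List.ofFn D) y).annihilator := by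
    simpa only [List.length_ofFn] using pow_le_annihilator_span_applyChain hI (List.ofFn D)
  exact (Submodule.mem_annihilator_span_singleton _ _).mp
    (hchain (Ideal.pow_le_pow_right (Nat.succ_le_succ hk) hprod))
end

section
/- Let X and Y be k-subspaces of A with XY = 0, and suppose that the g-submodule of A generated by Y equals U_{≤n}·Y for some n ≥ 0. Then ⟨X^{n+1}⟩ · ⟨Y⟩ = 0, where ⟨Z⟩ denotes the g-submodule of A generated by Z. -/
/-!
By the Leibniz rule, a derivation `D` satisfies `P * D(Q) ⊆ D(P * Q) + D(P) * Q` for all subspaces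
`P` and `Q`, and `D(X ^ (m + 1)) ⊆ X ^ m * A`. If `X ^ m * V = 0`, then taking `P = X ^ (m + 1)` and
`Q = V` gives `X ^ (m + 1) * D(V) = 0`: one more power of `X` pays for one more derivative. Hence
`X ^ (n + 1)` annihilates `U_{≤n}·Y = ⟨Y⟩`. By the same inclusion, now with `Q` the annihilator
of `P = ⟨Y⟩`, the annihilator of `⟨Y⟩` is `g`-stable, so it contains `⟨X ^ (n + 1)⟩` as well.
-/

section

variable {k : Type*} [Field k] {g : Type*} [LieRing g] [LieAlgebra k g]
  {A : Type*} [CommRing A] [Algebra k A]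

/-- `Ule ρ V n` is `U_{≤n}·V`: the span of all `ρ(x₁)(ρ(x₂)(⋯ρ(x_j)(v)⋯))` with
`0 ≤ j ≤ n`, `xᵢ ∈ g`, `v ∈ V`. -/
def Ule (ρ : g →ₗ⁅k⁆ Derivation k A A) (V : Submodule k A) : ℕ → Submodule k A
  | 0 => V
  | n + 1 => Ule ρ V n ⊔ Submodule.span k {a : A | ∃ x : g, ∃ v ∈ Ule ρ V n, ρ x v = a}

/-- The `g`-submodule of `A` generated by a subspace `Z`: the smallest subspace of `A`
containing `Z` that is stable under `ρ(x)` for all `x ∈ g`. -/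
def gSpan (ρ : g →ₗ⁅k⁆ Derivation k A A) (Z : Submodule k A) : Submodule k A :=
  sInf {W : Submodule k A | Z ≤ W ∧ ∀ x : g, ∀ a ∈ W, ρ x a ∈ W}

section Derivation

variable {R B : Type*}

section CommSemiring

variable [CommSemiring R] [CommSemiring B] [Algebra R B] (D : Derivation R B B)

theorem map_derivation_mul_le (P Q : Submodule R B) :
    (P * Q).map D.toLinearMap ≤ P * Q.map D.toLinearMap ⊔ P.map D.toLinearMap * Q := by
  rw [Submodule.map_le_iff_le_comap, Submodule.mul_le]
  intro p hp q hq
  have leibniz : D (p * q) = p * D q + D p * q := by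
    rw [D.leibniz, smul_eq_mul, smul_eq_mul, mul_comm q]
  rw [Submodule.mem_comap, Derivation.coeFn_coe, leibniz]
  exact Submodule.add_mem_sup
    (Submodule.mul_mem_mul hp (Submodule.mem_map_of_mem hq))
    (Submodule.mul_mem_mul (Submodule.mem_map_of_mem hp) hq)

theorem map_derivation_pow_succ_le (P : Submodule R B) (m : ℕ) :
    (P ^ (m + 1)).map D.toLinearMap ≤ P ^ m * ⊤ := by
  induction m with
  | zero => simp
  | succ m ih =>
    calc (P ^ (m + 1 + 1)).map D.toLinearMap
        = (P ^ (m + 1) * P).map D.toLinearMap := by rw [pow_succ]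
      _ ≤ P ^ (m + 1) * P.map D.toLinearMap ⊔ (P ^ (m + 1)).map D.toLinearMap * P :=
          map_derivation_mul_le D _ _
      _ ≤ P ^ (m + 1) * ⊤ ⊔ P ^ m * ⊤ * P := by gcongr; exact le_top
      _ = P ^ (m + 1) * ⊤ := by rw [mul_right_comm, ← pow_succ, sup_idem]

end CommSemiring

section CommRing

variable [CommRing R] [CommRing B] [Algebra R B] (D : Derivation R B B)

theorem mul_map_derivation_le (P Q : Submodule R B) :
    P * Q.map D.toLinearMap ≤ (P * Q).map D.toLinearMap ⊔ P.map D.toLinearMap * Q := by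
  rw [Submodule.mul_le]
  rintro p hp _ ⟨q, hq, rfl⟩
  have leibniz : p * D q = D (p * q) + -(D p * q) := by
    rw [D.leibniz, smul_eq_mul, smul_eq_mul, mul_comm q, add_neg_cancel_right]
  rw [Derivation.coeFn_coe, leibniz, ← neg_mul, ← map_neg]
  exact Submodule.add_mem_sup
    (Submodule.mem_map_of_mem (Submodule.mul_mem_mul hp hq))
    (Submodule.mul_mem_mul (Submodule.mem_map_of_mem (neg_mem hp)) hq)

theorem pow_succ_mul_map_derivation_eq_bot {P V : Submodule R B} {m : ℕ} (hPV : P ^ m * V = ⊥) :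
    P ^ (m + 1) * V.map D.toLinearMap = ⊥ := by
  have pow_succ_mul_eq_bot : P ^ (m + 1) * V = ⊥ := by
    rw [pow_succ', mul_assoc, hPV, Submodule.mul_bot]
  rw [eq_bot_iff]
  calc P ^ (m + 1) * V.map D.toLinearMap
      ≤ (P ^ (m + 1) * V).map D.toLinearMap ⊔ (P ^ (m + 1)).map D.toLinearMap * V :=
        mul_map_derivation_le D _ _
    _ ≤ (P ^ (m + 1) * V).map D.toLinearMap ⊔ P ^ m * ⊤ * V := by
        gcongr
        exact map_derivation_pow_succ_le D P m
    _ = ⊥ := by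
        rw [pow_succ_mul_eq_bot, mul_right_comm, hPV, Submodule.map_bot, Submodule.bot_mul,
          sup_idem]

theorem map_derivation_div_le {V W : Submodule R B} (hV : V.map D.toLinearMap ≤ V)
    (hW : W.map D.toLinearMap ≤ W) : (W / V).map D.toLinearMap ≤ W / V := by
  have div_mul_le : W / V * V ≤ W := Submodule.le_div_iff_mul_le.mp le_rfl
  rw [Submodule.le_div_iff_mul_le, mul_comm]
  calc V * (W / V).map D.toLinearMap
      ≤ (V * (W / V)).map D.toLinearMap ⊔ V.map D.toLinearMap * (W / V) :=
        mul_map_derivation_le D _ _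
    _ ≤ (V * (W / V)).map D.toLinearMap ⊔ V * (W / V) := by gcongr
    _ ≤ W := by
        rw [mul_comm]
        exact sup_le ((Submodule.map_mono div_mul_le).trans hW) div_mul_le

end CommRing

end Derivation

theorem Ule_succ (ρ : g →ₗ⁅k⁆ Derivation k A A) (V : Submodule k A) (n : ℕ) :
    Ule ρ V (n + 1) = Ule ρ V n ⊔ ⨆ x : g, (Ule ρ V n).map (ρ x).toLinearMap := by
  have setOf_eq : {a : A | ∃ x : g, ∃ v ∈ Ule ρ V n, ρ x v = a} =
      ⋃ x : g, ((Ule ρ V n).map (ρ x).toLinearMap : Set A) := by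
    ext a
    simp
  rw [Ule, setOf_eq, Submodule.span_iUnion]
  simp only [Submodule.span_eq]

theorem pow_succ_mul_Ule_eq_bot (ρ : g →ₗ⁅k⁆ Derivation k A A) {X Y : Submodule k A}
    (hXY : X * Y = ⊥) (n : ℕ) : X ^ (n + 1) * Ule ρ Y n = ⊥ := by
  induction n with
  | zero => rwa [zero_add, pow_one]
  | succ n ih =>
    have mul_Ule : X ^ (n + 1 + 1) * Ule ρ Y n = ⊥ := by
      rw [pow_succ', mul_assoc, ih, Submodule.mul_bot]
    have mul_map (x : g) : X ^ (n + 1 + 1) * (Ule ρ Y n).map (ρ x).toLinearMap = ⊥ :=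
      pow_succ_mul_map_derivation_eq_bot (ρ x) ih
    simp only [Ule_succ, Submodule.mul_sup, Submodule.mul_iSup, mul_Ule, mul_map, iSup_bot,
      sup_idem]

theorem map_gSpan_le (ρ : g →ₗ⁅k⁆ Derivation k A A) (Z : Submodule k A) (x : g) :
    (gSpan ρ Z).map (ρ x).toLinearMap ≤ gSpan ρ Z :=
  le_sInf fun _ hW => Submodule.map_le_iff_le_comap.mpr fun a ha => hW.2 x a (sInf_le hW ha)

theorem gSpan_le (ρ : g →ₗ⁅k⁆ Derivation k A A) {Z W : Submodule k A} (hZW : Z ≤ W)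
    (hW : ∀ x : g, W.map (ρ x).toLinearMap ≤ W) : gSpan ρ Z ≤ W :=
  sInf_le ⟨hZW, fun x _ ha => hW x (Submodule.mem_map_of_mem ha)⟩

/-- If `X`, `Y` are subspaces of `A` with `XY = 0`, and the `g`-submodule generated by `Y`
equals `U_{≤n}·Y` for some `n`, then `⟨X^{n+1}⟩ · ⟨Y⟩ = 0`, where `⟨Z⟩` is the `g`-submodule
of `A` generated by `Z`. -/
theorem gSpan_pow_mul_gSpan_eq_bot (ρ : g →ₗ⁅k⁆ Derivation k A A)
    (X Y : Submodule k A) (hXY : X * Y = ⊥) (n : ℕ) (hY : gSpan ρ Y = Ule ρ Y n) :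
    gSpan ρ (X ^ (n + 1)) * gSpan ρ Y = ⊥ := by
  have pow_le : X ^ (n + 1) ≤ ⊥ / gSpan ρ Y := by
    rw [Submodule.le_div_iff_mul_le, hY, pow_succ_mul_Ule_eq_bot ρ hXY]
  have annihilator_stable (x : g) :
      (⊥ / gSpan ρ Y).map (ρ x).toLinearMap ≤ ⊥ / gSpan ρ Y :=
    map_derivation_div_le (ρ x) (map_gSpan_le ρ Y x) (Submodule.map_bot _).le
  rw [eq_bot_iff, ← Submodule.le_div_iff_mul_le]
  exact gSpan_le ρ pow_le annihilator_stable

end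
end

section
/- Let a be a G-stable ideal of A and let x_1, …, x_m ∈ rad_G(a). Then there exists N ≥ 1 such that every product of N elements of A, each of the form g•x_i for some g ∈ G and 1 ≤ i ≤ m, lies in a; equivalently, the G-stable additive subgroup X of A generated by x_1, …, x_m satisfies X^N ⊆ a. -/
/-!
If `c ^ n ≤ a` and `d ^ k ≤ a`, then `(c ⊔ d) ^ (n + k) ≤ c ^ n ⊔ d ^ k ≤ a`. The `G`-stable ideals
that are nilpotent modulo `a` are therefore directed, and a finitely generated ideal contained in
their sum already lies in one of them, say `c` with `c ^ N ≤ a`. Being `G`-stable, `c` contains all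
`g • x i`, so products of `N` of these elements lie in `c ^ N ≤ a`.
-/

open Pointwise

/-- An ideal of `A` is `G`-stable if it is preserved by the action of every `g : G`. -/
def IsGStableIdeal (G : Type*) {A : Type*} [Group G] [CommRing A] [MulSemiringAction G A]
    (I : Ideal A) : Prop :=
  ∀ g : G, ∀ x ∈ I, g • x ∈ I

/-- The `G`-radical of a `G`-stable ideal `a`: the sum of all `G`-stable ideals `c`
with `c ^ n ⊆ a` for some `n ≥ 1`. -/
def gRadical (G : Type*) {A : Type*} [Group G] [CommRing A] [MulSemiringAction G A]
    (a : Ideal A) : Ideal A :=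
  sSup {c : Ideal A | IsGStableIdeal G c ∧ ∃ n ≥ 1, c ^ n ≤ a}

/-- The `n`-fold product `X ^ n` of an additive subgroup of a ring, for `n ≥ 1`.
(The value at `n = 0` is a junk value, never used below.) -/
def sgPow {A : Type*} [CommRing A] (X : AddSubgroup A) : ℕ → AddSubgroup A
  | 0 => ⊥
  | 1 => X
  | (n + 2) => sgPow X (n + 1) * X

/-- The `G`-stable additive subgroup of `A` generated by a set `s`. -/
def gOrbitClosure (G : Type*) {A : Type*} [Group G] [CommRing A] [MulSemiringAction G A]
    (s : Set A) : AddSubgroup A :=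
  AddSubgroup.closure (⋃ g : G, (g • ·) '' s)

section

variable {G A : Type*} [Group G] [CommRing A] [MulSemiringAction G A]

theorem IsGStableIdeal.bot : IsGStableIdeal G (⊥ : Ideal A) := by
  rintro g x rfl
  exact smul_zero g

theorem IsGStableIdeal.sup {c d : Ideal A} (hc : IsGStableIdeal G c) (hd : IsGStableIdeal G d) :
    IsGStableIdeal G (c ⊔ d) := by
  intro g x hx
  obtain ⟨u, hu, v, hv, rfl⟩ := Submodule.mem_sup.mp hx
  rw [smul_add]
  exact Submodule.add_mem_sup (hc g u hu) (hd g v hv)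

theorem IsGStableIdeal.gOrbitClosure_le {c : Ideal A} (hc : IsGStableIdeal G c) {s : Set A}
    (hs : s ⊆ c) : gOrbitClosure G s ≤ c.toAddSubgroup := by
  rw [gOrbitClosure, AddSubgroup.closure_le]
  refine Set.iUnion_subset fun g ↦ ?_
  rintro _ ⟨x, hx, rfl⟩
  exact hc g x (hs hx)

variable (G) in
/-- The `G`-stable ideals `c` that are nilpotent modulo `a`, that is, `c ^ n ≤ a` for some `n ≥ 1`.
These are the ideals whose sum is `gRadical G a`. -/
def IsGStableNilpotentMod (a c : Ideal A) : Prop :=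
  IsGStableIdeal G c ∧ ∃ n ≥ 1, c ^ n ≤ a

theorem IsGStableNilpotentMod.bot (a : Ideal A) : IsGStableNilpotentMod G a ⊥ :=
  ⟨.bot, 1, le_rfl, by simp⟩

theorem IsGStableNilpotentMod.sup {a c d : Ideal A} (hc : IsGStableNilpotentMod G a c)
    (hd : IsGStableNilpotentMod G a d) : IsGStableNilpotentMod G a (c ⊔ d) := by
  obtain ⟨hcG, n, hn, hcn⟩ := hc
  obtain ⟨hdG, k, -, hdk⟩ := hd
  exact ⟨hcG.sup hdG, n + k, Nat.le_add_right_of_le hn,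
    Ideal.sup_pow_add_le_pow_sup_pow.trans (sup_le hcn hdk)⟩

theorem directedOn_isGStableNilpotentMod (a : Ideal A) :
    DirectedOn (· ≤ ·) {c : Ideal A | IsGStableNilpotentMod G a c} :=
  fun c hc d hd ↦ ⟨c ⊔ d, hc.sup hd, le_sup_left, le_sup_right⟩

theorem exists_isGStableNilpotentMod_of_fg_of_le_gRadical {a I : Ideal A} (hI : I.FG)
    (hIa : I ≤ gRadical G a) : ∃ c, IsGStableNilpotentMod G a c ∧ I ≤ c :=
  (CompleteLattice.isCompactElement_iff_le_of_directed_sSup_le (Ideal A) I).mp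
    ((Submodule.fg_iff_compact I).mp hI) _ ⟨⊥, IsGStableNilpotentMod.bot a⟩
    (directedOn_isGStableNilpotentMod a) hIa

end

theorem sgPow_le_pow {A : Type*} [CommRing A] {X : AddSubgroup A} {c : Ideal A}
    (hX : X ≤ c.toAddSubgroup) : ∀ n, sgPow X n ≤ (c ^ n).toAddSubgroup
  | 0 => bot_le
  | 1 => by rwa [pow_one]
  | n + 2 => by
    have mul_mem_pow : ∀ u ∈ sgPow X (n + 1), ∀ v ∈ X, u * v ∈ c ^ (n + 2) := fun u hu v hv ↦ by
      rw [pow_succ]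
      exact Ideal.mul_mem_mul (sgPow_le_pow hX (n + 1) hu) (hX hv)
    exact AddSubmonoid.mul_le.mpr mul_mem_pow

theorem prod_mem_ideal_pow_card {A ι : Type*} [CommSemiring A] {c : Ideal A} {s : Finset ι}
    {f : ι → A} (hf : ∀ j ∈ s, f j ∈ c) : ∏ j ∈ s, f j ∈ c ^ s.card :=
  Finset.prod_const c (s := s) ▸ Ideal.prod_mem_prod hf

theorem pow_subset_of_mem_gRadical_general {G A ι : Type*} [Group G] [CommRing A]
    [MulSemiringAction G A] [Finite ι] (a : Ideal A) (x : ι → A) (hx : ∀ i, x i ∈ gRadical G a) :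
    ∃ N ≥ 1,
      (∀ f : Fin N → A, (∀ j, ∃ (g : G) (i : ι), f j = g • x i) → (∏ j, f j) ∈ a) ∧
      ((sgPow (gOrbitClosure G (Set.range x)) N : AddSubgroup A) : Set A) ⊆ (a : Set A) := by
  obtain ⟨c, ⟨hcG, N, hN, hcN⟩, hspan⟩ := exists_isGStableNilpotentMod_of_fg_of_le_gRadical
    (Submodule.fg_span (Set.finite_range x)) (Ideal.span_le.mpr (Set.range_subset_iff.mpr hx))
  have hxc : Set.range x ⊆ c := Ideal.span_le.mp hspan
  refine ⟨N, hN, fun f hf ↦ hcN ?_, fun y hy ↦ hcN ?_⟩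
  · have hfc : ∀ j ∈ Finset.univ, f j ∈ c := fun j _ ↦ by
      obtain ⟨g, i, hj⟩ := hf j
      exact hj ▸ hcG g (x i) (hxc ⟨i, rfl⟩)
    simpa using prod_mem_ideal_pow_card hfc
  · exact sgPow_le_pow (hcG.gOrbitClosure_le hxc) N hy

/-- If `x₁, …, xₘ` lie in the `G`-radical of a `G`-stable ideal `a`, then there is an `N ≥ 1`
such that every product of `N` elements of the form `g • xᵢ` lies in `a`; equivalently, the
`G`-stable additive subgroup `X` generated by the `xᵢ` satisfies `X ^ N ⊆ a`. -/
theorem pow_subset_of_mem_gRadical {G A : Type*} [Group G] [CommRing A] [MulSemiringAction G A]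
    (a : Ideal A) (ha : IsGStableIdeal G a) (m : ℕ) (x : Fin m → A)
    (hx : ∀ i, x i ∈ gRadical G a) :
    ∃ N ≥ 1,
      (∀ f : Fin N → A, (∀ j, ∃ (g : G) (i : Fin m), f j = g • x i) → (∏ j, f j) ∈ a) ∧
      ((sgPow (gOrbitClosure G (Set.range x)) N : AddSubgroup A) : Set A) ⊆ (a : Set A) :=
  pow_subset_of_mem_gRadical_general a x hx
end

section
/- Let q be a prime ideal of A in the ordinary sense. Then ⋂_{g∈G} g•q is the largest G-stable ideal of A contained in q, and it is a G-prime of A. -/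
/-- A `G`-prime of `A` is a proper `G`-stable ideal `p` such that for all `G`-stable ideals
`a`, `b`, `a * b ⊆ p` implies `a ⊆ p` or `b ⊆ p`. -/
def IsGPrime (G : Type*) {A : Type*} [Group G] [CommRing A] [MulSemiringAction G A]
    (p : Ideal A) : Prop :=
  p ≠ ⊤ ∧ IsGStableIdeal G p ∧
    ∀ a b : Ideal A, IsGStableIdeal G a → IsGStableIdeal G b → a * b ≤ p → a ≤ p ∨ b ≤ p

section

open scoped Pointwise

lemma mem_iInf_pointwise_smul_iff {G A : Type*} [Group G] [Semiring A] [MulSemiringAction G A]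
    {I : Ideal A} {x : A} : x ∈ ⨅ g : G, g • I ↔ ∀ g : G, g • x ∈ I := by
  rw [← (Equiv.inv G).iInf_comp]
  simp only [Equiv.inv_apply, Ideal.mem_iInf, Ideal.mem_inv_pointwise_smul_iff]

variable (G : Type*) {A : Type*} [Group G] [CommRing A] [MulSemiringAction G A]

lemma isGStableIdeal_iInf_pointwise_smul (I : Ideal A) : IsGStableIdeal G (⨅ g : G, g • I) := by
  intro h x hx
  rw [mem_iInf_pointwise_smul_iff] at hx ⊢
  intro g
  rw [smul_smul]
  exact hx (g * h)

lemma isGreatest_iInf_pointwise_smul (I : Ideal A) :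
    IsGreatest {J | IsGStableIdeal G J ∧ J ≤ I} (⨅ g : G, g • I) := by
  refine ⟨⟨isGStableIdeal_iInf_pointwise_smul G I, ?_⟩, ?_⟩
  · exact iInf_le_of_le 1 (one_smul G I).le
  · rintro J ⟨hJ, hJI⟩ x hx
    exact mem_iInf_pointwise_smul_iff.2 fun g ↦ hJI (hJ g x hx)

variable {G}

lemma isGPrime_of_isGreatest {p q : Ideal A} (hq : q.IsPrime)
    (hp : IsGreatest {J | IsGStableIdeal G J ∧ J ≤ q} p) : IsGPrime G p := by
  obtain ⟨⟨hstable, hpq⟩, hmax⟩ := hp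
  refine ⟨ne_top_of_le_ne_top hq.ne_top hpq, hstable, fun a b ha hb hab ↦ ?_⟩
  have a_or_b_le_q : a ≤ q ∨ b ≤ q := hq.mul_le.1 (hab.trans hpq)
  exact a_or_b_le_q.imp (fun haq ↦ hmax ⟨ha, haq⟩) (fun hbq ↦ hmax ⟨hb, hbq⟩)

end

/-- For an ordinary prime `q` of `A`, the intersection `⋂_{g ∈ G} g • q` is the largest
`G`-stable ideal of `A` contained in `q`, and it is a `G`-prime of `A`. -/
theorem iInf_smul_prime_isGPrime {G A : Type*} [Group G] [CommRing A] [MulSemiringAction G A]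
    (q : Ideal A) (hq : q.IsPrime) :
    (IsGStableIdeal G (⨅ g : G, q.map (MulSemiringAction.toRingHom G A g)) ∧
      (⨅ g : G, q.map (MulSemiringAction.toRingHom G A g)) ≤ q ∧
      ∀ J : Ideal A, IsGStableIdeal G J → J ≤ q →
        J ≤ ⨅ g : G, q.map (MulSemiringAction.toRingHom G A g)) ∧
    IsGPrime G (⨅ g : G, q.map (MulSemiringAction.toRingHom G A g)) := by
  simp only [← Ideal.pointwise_smul_def]
  have hgreatest := isGreatest_iInf_pointwise_smul G q
  have ⟨⟨hstable, hle⟩, hmax⟩ := hgreatest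
  exact ⟨⟨hstable, hle, fun J hJ hJq ↦ hmax ⟨hJ, hJq⟩⟩, isGPrime_of_isGreatest hq hgreatest⟩
end

section
/- Let G be a group acting on a nontrivial commutative ring A by ring automorphisms. Assume: (A) for all G-stable ideals a, b of A, rad_G(a) ⊆ rad_G(b) if and only if rad(a) ⊆ rad(b); and (B) for every G-stable ideal a of A, rad_G(a) is a G-prime if and only if rad(a) is a prime ideal. Then the map p ↦ rad(p) is a bijection from the set of minimal G-primes of A onto the set of minimal prime ideals of A, with inverse q ↦ ⋂_{g∈G} g•q. -/
/-- The set of minimal `G`-primes of `A`. -/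
def minGPrimes (G A : Type*) [Group G] [CommRing A] [MulSemiringAction G A] : Set (Ideal A) :=
  {p | IsGPrime G p ∧ ∀ q : Ideal A, IsGPrime G q → q ≤ p → q = p}

/-- The set of minimal primes of `A`. -/
def minPrimes (A : Type*) [CommRing A] : Set (Ideal A) :=
  {q | q.IsPrime ∧ ∀ q' : Ideal A, q'.IsPrime → q' ≤ q → q' = q}

section

variable {G A : Type*} [Group G] [CommRing A] [MulSemiringAction G A] {I J p q : Ideal A}

namespace IsGStableIdeal

theorem map_le (hI : IsGStableIdeal G I) (g : G) :
    I.map (MulSemiringAction.toRingHom G A g) ≤ I :=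
  Ideal.map_le_iff_le_comap.2 (hI g)

theorem pow (hI : IsGStableIdeal G I) (n : ℕ) : IsGStableIdeal G (I ^ n) := by
  intro g
  have hmap : (I ^ n).map (MulSemiringAction.toRingHom G A g) ≤ I ^ n := by
    rw [Ideal.map_pow]
    exact Ideal.pow_right_mono (hI.map_le g) n
  exact Ideal.map_le_iff_le_comap.1 hmap

theorem radical (hI : IsGStableIdeal G I) : IsGStableIdeal G I.radical := by
  rintro g x ⟨n, hn⟩
  exact ⟨n, by simpa only [smul_pow'] using hI g _ hn⟩

theorem le_gRadical (hI : IsGStableIdeal G I) : I ≤ gRadical G I :=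
  le_sSup ⟨hI, 1, le_rfl, (pow_one I).le⟩

end IsGStableIdeal

theorem gRadical_le_radical (I : Ideal A) : gRadical G I ≤ I.radical :=
  sSup_le fun _ ⟨_, n, _, hn⟩ _ hx => ⟨n, hn (Ideal.pow_mem_pow hx n)⟩

theorem gRadical_eq_radical
    (hmono : ∀ a b : Ideal A, IsGStableIdeal G a → IsGStableIdeal G b →
      a.radical ≤ b.radical → gRadical G a ≤ gRadical G b)
    (hI : IsGStableIdeal G I) : gRadical G I = I.radical :=
  (gRadical_le_radical I).antisymm <|
    hI.radical.le_gRadical.trans (hmono _ _ hI.radical hI (Ideal.radical_idem I).le)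

namespace IsGPrime

theorem le_of_pow_le (hp : IsGPrime G p) (hI : IsGStableIdeal G I) {n : ℕ} (h : I ^ n ≤ p) :
    I ≤ p := by
  induction n with
  | zero => exact absurd (top_le_iff.1 (by simpa using h)) hp.1
  | succ n ih =>
    rw [pow_succ] at h
    exact (hp.2.2 _ _ (hI.pow n) hI h).elim ih id

theorem gRadical_eq (hp : IsGPrime G p) : gRadical G p = p :=
  le_antisymm (sSup_le fun _ ⟨hc, _, _, hn⟩ => hp.le_of_pow_le hc hn) hp.2.1.le_gRadical

theorem isPrime (hp : IsGPrime G p)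
    (hmono : ∀ a b : Ideal A, IsGStableIdeal G a → IsGStableIdeal G b →
      a.radical ≤ b.radical → gRadical G a ≤ gRadical G b)
    (hprime : ∀ a : Ideal A, IsGStableIdeal G a → IsGPrime G (gRadical G a) → a.radical.IsPrime) :
    p.IsPrime := by
  have hrad : p.radical = p := (gRadical_eq_radical hmono hp.2.1).symm.trans hp.gRadical_eq
  have hp' : IsGPrime G (gRadical G p) := hp.gRadical_eq.symm ▸ hp
  exact hrad ▸ hprime p hp.2.1 hp'

end IsGPrime

variable (G) in
/-- The `G`-core `⋂_{g ∈ G} g • I` of an ideal `I`, which is the largest `G`-stable ideal contained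
in `I`. The translate `g • I` is written as the image of `I` under the ring homomorphism
`x ↦ g • x`, as in `minGPrimes_bijOn_minPrimes`. -/
def gCore (I : Ideal A) : Ideal A :=
  ⨅ g : G, I.map (MulSemiringAction.toRingHom G A g)

open scoped Pointwise in
theorem mem_gCore {x : A} : x ∈ gCore G I ↔ ∀ g : G, g • x ∈ I := by
  have hmem (g : G) : x ∈ I.map (MulSemiringAction.toRingHom G A g) ↔ g⁻¹ • x ∈ I :=
    Ideal.mem_pointwise_smul_iff_inv_smul_mem
  simp only [gCore, Ideal.mem_iInf, hmem]
  exact (inv_surjective.forall (p := fun g : G => g • x ∈ I)).symm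

theorem gCore_le (I : Ideal A) : gCore G I ≤ I :=
  fun x hx => one_smul G x ▸ mem_gCore.1 hx 1

theorem isGStableIdeal_gCore (I : Ideal A) : IsGStableIdeal G (gCore G I) :=
  fun g x hx => mem_gCore.2 fun h => mul_smul h g x ▸ mem_gCore.1 hx (h * g)

theorem IsGStableIdeal.le_gCore (hI : IsGStableIdeal G I) (hIJ : I ≤ J) : I ≤ gCore G J :=
  fun x hx => mem_gCore.2 fun g => hIJ (hI g x hx)

theorem isGPrime_gCore (hq : q.IsPrime) : IsGPrime G (gCore G q) := by
  refine ⟨ne_top_of_le_ne_top hq.ne_top (gCore_le q), isGStableIdeal_gCore q,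
    fun a b ha hb hab => ?_⟩
  exact (hq.mul_le.1 (hab.trans (gCore_le q))).imp ha.le_gCore hb.le_gCore

theorem gCore_eq_of_mem_minPrimes (hP : ∀ p : Ideal A, IsGPrime G p → p.IsPrime)
    (hq : q ∈ minPrimes A) : gCore G q = q :=
  hq.2 _ (hP _ (isGPrime_gCore hq.1)) (gCore_le q)

theorem minGPrimes_eq_minPrimes (hP : ∀ p : Ideal A, IsGPrime G p → p.IsPrime) :
    minGPrimes G A = minPrimes A := by
  ext q
  constructor
  · rintro ⟨hq, hmin⟩
    refine ⟨hP q hq, fun q' hq' hle => hle.antisymm ?_⟩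
    have hcore : gCore G q' = q := hmin _ (isGPrime_gCore hq') ((gCore_le q').trans hle)
    exact hcore ▸ gCore_le q'
  · intro hq
    have hGPrime : IsGPrime G q := gCore_eq_of_mem_minPrimes hP hq ▸ isGPrime_gCore hq.1
    exact ⟨hGPrime, fun p hp hle => hq.2 p (hP p hp) hle⟩

end

theorem minGPrimes_bijOn_minPrimes_general {G A : Type*} [Group G] [CommRing A]
    [MulSemiringAction G A] (hP : ∀ p : Ideal A, IsGPrime G p → p.IsPrime) :
    Set.BijOn (fun p : Ideal A => p.radical) (minGPrimes G A) (minPrimes A) ∧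
    (∀ p ∈ minGPrimes G A,
      (⨅ g : G, p.radical.map (MulSemiringAction.toRingHom G A g)) = p) ∧
    (∀ q ∈ minPrimes A,
      (⨅ g : G, q.map (MulSemiringAction.toRingHom G A g)).radical = q) := by
  have hrad : ∀ q ∈ minPrimes A, q.radical = q := fun _ hq => hq.1.radical
  have hcore : ∀ q ∈ minPrimes A, gCore G q = q := fun _ hq => gCore_eq_of_mem_minPrimes hP hq
  rw [minGPrimes_eq_minPrimes hP]
  refine ⟨(Set.bijOn_id _).congr fun q hq => (hrad q hq).symm, fun p hp => ?_, fun q hq => ?_⟩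
  · exact (congrArg (gCore G) (hrad p hp)).trans (hcore p hp)
  · exact (congrArg Ideal.radical (hcore q hq)).trans (hrad q hq)

/-- Under properties (A) and (B), the map `p ↦ rad(p)` is a bijection from the minimal
`G`-primes of `A` to the minimal primes of `A`, with inverse `q ↦ ⋂_{g ∈ G} g • q`. -/
theorem minGPrimes_bijOn_minPrimes {G A : Type*} [Group G] [CommRing A] [MulSemiringAction G A]
    [Nontrivial A]
    (hA : ∀ a b : Ideal A, IsGStableIdeal G a → IsGStableIdeal G b →
      (gRadical G a ≤ gRadical G b ↔ a.radical ≤ b.radical))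
    (hB : ∀ a : Ideal A, IsGStableIdeal G a →
      (IsGPrime G (gRadical G a) ↔ a.radical.IsPrime)) :
    Set.BijOn (fun p : Ideal A => p.radical) (minGPrimes G A) (minPrimes A) ∧
    (∀ p ∈ minGPrimes G A,
      (⨅ g : G, p.radical.map (MulSemiringAction.toRingHom G A g)) = p) ∧
    (∀ q ∈ minPrimes A,
      (⨅ g : G, q.map (MulSemiringAction.toRingHom G A g)).radical = q) :=
  minGPrimes_bijOn_minPrimes_general fun _ hp =>
    hp.isPrime (fun a b ha hb => (hA a b ha hb).2) fun a ha => (hB a ha).1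
end

section
/- Let h be a Lie subalgebra of g. Assume that for every finite-dimensional k-subspace X of A there exists a Lie subalgebra p of g with g = p + h (as k-subspaces of g) such that the p-submodule of A generated by X is finite-dimensional. Let b be an h-stable ideal of A and let a be the largest g-stable ideal of A contained in b (the sum of all g-stable ideals of A contained in b). Then the largest g-stable subspace of A contained in rad(b) equals the largest g-stable subspace of A contained in rad(a); equivalently, every g-stable subspace of A contained in rad(b) is contained in rad(a). Here rad denotes the ordinary radical of an ideal. -/
/-!
Let `V ⊆ rad b` be `g`-stable, `v ∈ V`, and choose `p` with `g = p + h` such that the `p`-module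
`X` generated by `v` is finite dimensional. Since `X ⊆ V ⊆ rad b`, some power satisfies
`X ^ n ⊆ b`, and `X ^ n` is again `p`-stable by the Leibniz rule.

The point is that the `h`-module `N` generated by a `p`-stable subspace `W` is `g`-stable, an
elementary form of `U(g) W = U(h) U(p) W = U(h) W`: the elements that all of `g` sends into `N`
form an `h`-stable subspace, and it contains `W` because `g = p + h`. For `W = X ^ n` this `N` lies
in the `h`-stable ideal `b`. The ideal generated by `N` is `g`-stable and lies in `b`, hence in the
largest `g`-stable ideal `a` inside `b`, and it contains `v ^ n`.
-/

section

variable {k : Type*} [Field k] {g : Type*} [LieRing g] [LieAlgebra k g]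
  {A : Type*} [CommRing A] [Algebra k A]

/-- The `p`-submodule of `A` generated by a subspace `Z`, for a Lie subalgebra `p` of `g`:
the smallest subspace of `A` containing `Z` stable under `ρ(x)` for all `x ∈ p`. -/
def pSpan (ρ : g →ₗ⁅k⁆ Derivation k A A) (p : LieSubalgebra k g) (Z : Submodule k A) :
    Submodule k A :=
  sInf {W : Submodule k A | Z ≤ W ∧ ∀ x ∈ p, ∀ a ∈ W, ρ x a ∈ W}

section StableSpan

variable {R M ι : Type*} [Semiring R] [AddCommMonoid M] [Module R M]

/-- The smallest submodule containing `Z` and preserved by the operators `f i` with `i ∈ S`. It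
extends `pSpan` to index sets that need not be Lie subalgebras and to operators that need not be
derivations; `pSpan ρ p Z` is `stableSpan (ρ ·) p Z` definitionally. -/
def stableSpan (f : ι → M → M) (S : Set ι) (Z : Submodule R M) : Submodule R M :=
  sInf {W : Submodule R M | Z ≤ W ∧ ∀ i ∈ S, ∀ m ∈ W, f i m ∈ W}

variable {f : ι → M → M} {S : Set ι} {Z W : Submodule R M}

lemma le_stableSpan : Z ≤ stableSpan f S Z :=
  le_sInf fun _ hW ↦ hW.1

lemma stableSpan_le (hZ : Z ≤ W) (hW : ∀ i ∈ S, ∀ m ∈ W, f i m ∈ W) : stableSpan f S Z ≤ W :=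
  sInf_le ⟨hZ, hW⟩

lemma apply_mem_stableSpan {i : ι} (hi : i ∈ S) {m : M} (hm : m ∈ stableSpan f S Z) :
    f i m ∈ stableSpan f S Z :=
  Submodule.mem_sInf.2 fun W hW ↦ hW.2 i hi m (Submodule.mem_sInf.1 hm W hW)

end StableSpan

section LieModule

variable {R L M : Type*} [CommRing R] [LieRing L] [LieAlgebra R L] [AddCommGroup M] [Module R M]
  [LieRingModule L M] [LieModule R L M]

lemma lie_mem_iInf_comap_toEnd {N : Submodule R M} {y : L} (hN : ∀ m ∈ N, ⁅y, m⁆ ∈ N) :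
    ∀ m ∈ ⨅ x : L, N.comap (LieModule.toEnd R L M x),
      ⁅y, m⁆ ∈ ⨅ x : L, N.comap (LieModule.toEnd R L M x) := by
  simp only [Submodule.mem_iInf, Submodule.mem_comap, LieModule.toEnd_apply_apply]
  intro m hm x
  rw [leibniz_lie]
  exact N.add_mem (hm ⁅x, y⁆) (hN _ (hm x))

lemma lie_mem_stableSpan_of_sup_eq_top {p h : Submodule R L} (hph : p ⊔ h = ⊤)
    {W : Submodule R M} (hW : ∀ x ∈ p, ∀ w ∈ W, ⁅x, w⁆ ∈ W) (x : L) :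
    ∀ m ∈ stableSpan (⁅·, ·⁆) (h : Set L) W, ⁅x, m⁆ ∈ stableSpan (⁅·, ·⁆) (h : Set L) W := by
  set N := stableSpan (⁅·, ·⁆) (h : Set L) W
  have N_stable : ∀ y ∈ h, ∀ m ∈ N, ⁅y, m⁆ ∈ N := fun _ hy _ hm ↦ apply_mem_stableSpan hy hm
  have W_le : W ≤ ⨅ x : L, N.comap (LieModule.toEnd R L M x) := by
    refine le_iInf fun x w hw ↦ ?_
    obtain ⟨y, hy, z, hz, rfl⟩ := Submodule.mem_sup.1 (hph ▸ Submodule.mem_top : x ∈ p ⊔ h)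
    rw [Submodule.mem_comap, LieModule.toEnd_apply_apply, add_lie]
    exact N.add_mem (le_stableSpan (hW y hy w hw)) (N_stable z hz w (le_stableSpan hw))
  have N_le : N ≤ ⨅ x : L, N.comap (LieModule.toEnd R L M x) :=
    stableSpan_le W_le fun y hy ↦ lie_mem_iInf_comap_toEnd (N_stable y hy)
  exact N_le.trans (iInf_le _ x)

end LieModule

section CommSemiring

variable {R B : Type*} [CommSemiring R] [CommSemiring B] [Algebra R B]

lemma derivation_apply_mem_mul (D : Derivation R B B) {X Y : Submodule R B}
    (hX : ∀ a ∈ X, D a ∈ X) (hY : ∀ a ∈ Y, D a ∈ Y) : ∀ a ∈ X * Y, D a ∈ X * Y := by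
  intro a ha
  induction ha using Submodule.mul_induction_on' with
  | mem_mul_mem u hu v hv =>
    rw [D.leibniz, smul_eq_mul, smul_eq_mul, mul_comm v]
    exact add_mem (Submodule.mul_mem_mul hu (hY v hv)) (Submodule.mul_mem_mul (hX u hu) hv)
  | add u _ v _ hu hv => exact D.map_add u v ▸ add_mem hu hv

lemma derivation_apply_mem_pow (D : Derivation R B B) {X : Submodule R B}
    (hX : ∀ a ∈ X, D a ∈ X) (n : ℕ) : ∀ a ∈ X ^ n, D a ∈ X ^ n := by
  induction n with
  | zero =>
    intro a ha
    obtain ⟨r, rfl⟩ := Submodule.mem_one.1 (pow_zero X ▸ ha)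
    exact D.map_algebraMap r ▸ zero_mem _
  | succ n ih => exact pow_succ X n ▸ derivation_apply_mem_mul D ih hX

lemma derivation_apply_mem_idealSpan (D : Derivation R B B) {s : Set B}
    (hs : ∀ a ∈ s, D a ∈ s) : ∀ a ∈ Ideal.span s, D a ∈ Ideal.span s := by
  intro a ha
  induction ha using Submodule.span_induction with
  | mem a ha => exact Ideal.subset_span (hs a ha)
  | zero => rw [D.map_zero]; exact zero_mem _
  | add u v _ _ hu hv => exact D.map_add u v ▸ add_mem hu hv
  | smul c u hu hDu =>
    rw [smul_eq_mul, D.leibniz, smul_eq_mul, smul_eq_mul]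
    exact add_mem (Ideal.mul_mem_left _ c hDu) (Ideal.mul_mem_right _ _ hu)

lemma exists_pow_le_restrictScalars_of_subset_radical {X : Submodule R B} (hfg : X.FG)
    {b : Ideal B} (hX : (X : Set B) ⊆ b.radical) : ∃ n : ℕ, X ^ n ≤ b.restrictScalars R := by
  obtain ⟨n, hn⟩ := Ideal.exists_pow_le_of_le_radical_of_fg (Ideal.span_le.2 hX) hfg.span
  refine ⟨n, fun x hx ↦ hn ?_⟩
  rw [Submodule.pow_eq_span_pow_set] at hx
  rw [Ideal.span, Submodule.span_pow]
  exact Submodule.span_le_restrictScalars R B _ hx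

end CommSemiring

section DerivationAction

variable {R L B : Type*} [CommRing R] [LieRing L] [LieAlgebra R L] [CommRing B] [Algebra R B]
  (ρ : L →ₗ⁅R⁆ Derivation R B B)

lemma exists_stable_ideal_le_subset_radical {p h : Submodule R L} (hph : p ⊔ h = ⊤)
    {X : Submodule R B} (hfg : X.FG) (hX : ∀ x ∈ p, ∀ v ∈ X, ρ x v ∈ X)
    {b : Ideal B} (hb : ∀ x ∈ h, ∀ v ∈ b, ρ x v ∈ b) (hXb : (X : Set B) ⊆ b.radical) :
    ∃ c : Ideal B, (∀ x : L, ∀ v ∈ c, ρ x v ∈ c) ∧ c ≤ b ∧ (X : Set B) ⊆ c.radical := by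
  obtain ⟨n, hn⟩ := exists_pow_le_restrictScalars_of_subset_radical hfg hXb
  let _ := LieRingModule.compLieHom B ρ
  have := LieModule.compLieHom B ρ
  set N := stableSpan (ρ ·) h (X ^ n)
  have pow_stable : ∀ x ∈ p, ∀ v ∈ X ^ n, ρ x v ∈ X ^ n :=
    fun x hx ↦ derivation_apply_mem_pow (ρ x) (hX x hx) n
  have N_stable : ∀ x, ∀ v ∈ N, ρ x v ∈ N :=
    lie_mem_stableSpan_of_sup_eq_top hph pow_stable
  have N_le : N ≤ b.restrictScalars R := stableSpan_le hn hb
  exact ⟨Ideal.span N, fun x ↦ derivation_apply_mem_idealSpan (ρ x) (N_stable x),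
    Ideal.span_le.2 N_le,
    fun v hv ↦ ⟨n, Ideal.subset_span (le_stableSpan (Submodule.pow_mem_pow X hv n))⟩⟩

theorem gStable_floor_radical_eq_general (h : Submodule R L)
    (hfg : ∀ v : B, ∃ p : Submodule R L, p ⊔ h = ⊤ ∧
      (stableSpan (ρ ·) p (Submodule.span R {v})).FG)
    (b : Ideal B) (hb : ∀ x ∈ h, ∀ v ∈ b, ρ x v ∈ b)
    (a : Ideal B)
    (ha : a = sSup {c : Ideal B | (∀ x : L, ∀ v ∈ c, ρ x v ∈ c) ∧ c ≤ b}) :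
    sSup {W : Submodule R B | (∀ x : L, ∀ v ∈ W, ρ x v ∈ W) ∧
        (W : Set B) ⊆ (b.radical : Set B)} =
      sSup {W : Submodule R B | (∀ x : L, ∀ v ∈ W, ρ x v ∈ W) ∧
        (W : Set B) ⊆ (a.radical : Set B)} ∧
    ∀ V : Submodule R B, (∀ x : L, ∀ v ∈ V, ρ x v ∈ V) →
      (V : Set B) ⊆ (b.radical : Set B) → (V : Set B) ⊆ (a.radical : Set B) := by
  have subset_radical (V : Submodule R B) (hV : ∀ x : L, ∀ v ∈ V, ρ x v ∈ V)
      (hVb : (V : Set B) ⊆ b.radical) : (V : Set B) ⊆ a.radical := by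
    intro v hv
    obtain ⟨p, hph, hXfg⟩ := hfg v
    have span_le : stableSpan (ρ ·) p (Submodule.span R {v}) ≤ V :=
      stableSpan_le ((Submodule.span_singleton_le_iff_mem v V).2 hv) fun x _ ↦ hV x
    obtain ⟨c, hc, hcb, hXc⟩ := exists_stable_ideal_le_subset_radical ρ hph hXfg
      (fun _ hx _ ↦ apply_mem_stableSpan hx) hb (Set.Subset.trans span_le hVb)
    have hca : c ≤ a := ha ▸ le_sSup ⟨hc, hcb⟩
    exact Ideal.radical_mono hca (hXc (le_stableSpan (Submodule.mem_span_singleton_self v)))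
  have hab : a ≤ b := ha ▸ sSup_le fun _ hc ↦ hc.2
  exact ⟨le_antisymm (sSup_le_sSup fun W hW ↦ ⟨hW.1, subset_radical W hW.1 hW.2⟩)
    (sSup_le_sSup fun _ hW ↦ ⟨hW.1, hW.2.trans (Ideal.radical_mono hab)⟩), subset_radical⟩

end DerivationAction

/-- Suppose every finite-dimensional subspace of `A` has an "approximate stabilizer":
a Lie subalgebra `p` of `g` with `g = p + h` such that the `p`-submodule generated by the
subspace is finite dimensional.  Let `b` be an `h`-stable ideal and `a` the largest
`g`-stable ideal contained in `b`.  Then the largest `g`-stable subspace of `A` contained in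
`rad(b)` equals the largest `g`-stable subspace contained in `rad(a)`; equivalently, every
`g`-stable subspace of `A` contained in `rad(b)` is contained in `rad(a)`. -/
theorem gStable_floor_radical_eq (ρ : g →ₗ⁅k⁆ Derivation k A A) (h : LieSubalgebra k g)
    (hStab : ∀ X : Submodule k A, FiniteDimensional k X →
      ∃ p : LieSubalgebra k g, p.toSubmodule ⊔ h.toSubmodule = ⊤ ∧
        FiniteDimensional k (pSpan ρ p X))
    (b : Ideal A) (hb : ∀ x ∈ h, ∀ v ∈ b, ρ x v ∈ b)
    (a : Ideal A)
    (ha : a = sSup {c : Ideal A | (∀ x : g, ∀ v ∈ c, ρ x v ∈ c) ∧ c ≤ b}) :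
    sSup {W : Submodule k A | (∀ x : g, ∀ v ∈ W, ρ x v ∈ W) ∧
        (W : Set A) ⊆ (b.radical : Set A)} =
      sSup {W : Submodule k A | (∀ x : g, ∀ v ∈ W, ρ x v ∈ W) ∧
        (W : Set A) ⊆ (a.radical : Set A)} ∧
    ∀ V : Submodule k A, (∀ x : g, ∀ v ∈ V, ρ x v ∈ V) →
      (V : Set A) ⊆ (b.radical : Set A) → (V : Set A) ⊆ (a.radical : Set A) := by
  refine gStable_floor_radical_eq_general ρ h.toSubmodule (fun v ↦ ?_) b hb a ha
  obtain ⟨p, hph, hfin⟩ := hStab (Submodule.span k {v}) inferInstance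
  exact ⟨p.toSubmodule, hph, Module.Finite.iff_fg.1 hfin⟩

end
end

section
/- Let a be a G-stable ideal of A. Suppose that rad_G(a) equals the largest G-stable ideal of A contained in rad(a) (i.e., the sum of all G-stable ideals of A contained in rad(a)), and that rad(a) is a prime ideal. Then rad_G(a) is a G-prime of A. -/
/-- The largest `G`-stable ideal contained in `I`, encoded as the sum of all of them. It turns
prime ideals into `G`-primes. -/
def gStableCore (G : Type*) {A : Type*} [Group G] [CommRing A] [MulSemiringAction G A]
    (I : Ideal A) : Ideal A :=
  sSup {c : Ideal A | IsGStableIdeal G c ∧ c ≤ I}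

section

variable {G A : Type*} [Group G] [CommRing A] [MulSemiringAction G A]

theorem isGStableIdeal_iff_le_comap {I : Ideal A} :
    IsGStableIdeal G I ↔ ∀ g : G, I ≤ I.comap (MulSemiringAction.toRingHom G A g) :=
  Iff.rfl

theorem isGStableIdeal_sSup {S : Set (Ideal A)} (hS : ∀ c ∈ S, IsGStableIdeal G c) :
    IsGStableIdeal G (sSup S) :=
  isGStableIdeal_iff_le_comap.mpr fun g => sSup_le fun c hc =>
    (isGStableIdeal_iff_le_comap.mp (hS c hc) g).trans (Ideal.comap_mono (le_sSup hc))

theorem isGStableIdeal_gStableCore (I : Ideal A) : IsGStableIdeal G (gStableCore G I) :=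
  isGStableIdeal_sSup fun _ hc => hc.1

variable (G) in
theorem gStableCore_le (I : Ideal A) : gStableCore G I ≤ I :=
  sSup_le fun _ hc => hc.2

theorem IsGStableIdeal.le_gStableCore {c I : Ideal A} (hc : IsGStableIdeal G c) (hcI : c ≤ I) :
    c ≤ gStableCore G I :=
  le_sSup ⟨hc, hcI⟩

variable (G) in
theorem isGPrime_gStableCore {P : Ideal A} (hP : P.IsPrime) : IsGPrime G (gStableCore G P) := by
  refine ⟨ne_top_of_le_ne_top hP.ne_top (gStableCore_le G P), isGStableIdeal_gStableCore P,
    fun b c hb hc hbc => ?_⟩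
  have hbcP : b * c ≤ P := hbc.trans (gStableCore_le G P)
  exact (hP.mul_le.mp hbcP).imp hb.le_gStableCore hc.le_gStableCore

theorem gRadical_isGPrime_of_radical_isPrime_general {a : Ideal A}
    (h : gRadical G a = gStableCore G a.radical) (hrad : a.radical.IsPrime) :
    IsGPrime G (gRadical G a) :=
  h ▸ isGPrime_gStableCore G hrad

end

/-- If the `G`-radical of a `G`-stable ideal `a` is the largest `G`-stable ideal contained in
the ordinary radical of `a`, and the ordinary radical of `a` is prime, then the `G`-radical of
`a` is `G`-prime. -/
theorem gRadical_isGPrime_of_radical_isPrime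
    {G A : Type*} [Group G] [CommRing A] [MulSemiringAction G A]
    (a : Ideal A) (ha : IsGStableIdeal G a)
    (h1 : gRadical G a = sSup {c : Ideal A | IsGStableIdeal G c ∧ c ≤ a.radical})
    (h2 : a.radical.IsPrime) :
    IsGPrime G (gRadical G a) :=
  gRadical_isGPrime_of_radical_isPrime_general h1 h2
end
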